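/- arXiv:1705.00339 — 11 statements merged into one kernel-verified Lean document; each statement's English description precedes it below -/
import Mathlib

section
/- Let K be a field, and let A be an associative unital K-algebra containing elements g, x satisfying gx − xg = g − g². Then for every natural number i, one has g^i x = x g^i + i·g^i − i·g^{i+1}, where the integer i is interpreted in K via the canonical ring map. (Lemma 2.7(1) of the paper.) -/
/-!
Bracketing with `x` is a derivation, and `⁅g, x⁆ = g * (1 - g)` commutes with `g`. Hence the power
rule of commutative calculus applies to `g ^ i` and gives `⁅g ^ i, x⁆ = i • (g ^ i * (1 - g))`.
-/

theorem mul_lie_eq_mul_lie_add_lie_mul {A : Type*} [NonUnitalRing A] (a b c : A) :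
    ⁅a * b, c⁆ = a * ⁅b, c⁆ + ⁅a, c⁆ * b := by
  simp only [Ring.lie_def, mul_sub, sub_mul, mul_assoc]
  abel

section PowerRule

variable {A : Type*} [Ring A] {a b c : A}

theorem pow_succ_lie_of_commute_lie (h : Commute a ⁅a, b⁆) (n : ℕ) :
    ⁅a ^ (n + 1), b⁆ = (n + 1) • (a ^ n * ⁅a, b⁆) := by
  induction n with
  | zero => simp
  | succ n ih =>
    calc ⁅a ^ (n + 1 + 1), b⁆
        = a * ⁅a ^ (n + 1), b⁆ + ⁅a, b⁆ * a ^ (n + 1) := by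
          rw [pow_succ' a (n + 1), mul_lie_eq_mul_lie_add_lie_mul]
      _ = (n + 1) • (a ^ (n + 1) * ⁅a, b⁆) + a ^ (n + 1) * ⁅a, b⁆ := by
          rw [ih, mul_smul_comm, ← mul_assoc, ← pow_succ', (h.pow_left (n + 1)).eq]
      _ = (n + 1 + 1) • (a ^ (n + 1) * ⁅a, b⁆) := (succ_nsmul _ _).symm

theorem pow_lie_of_lie_eq_mul (hac : Commute a c) (h : ⁅a, b⁆ = a * c) (n : ℕ) :
    ⁅a ^ n, b⁆ = n • (a ^ n * c) := by
  cases n with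
  | zero => simp [Ring.lie_def]
  | succ n =>
    have commute_lie : Commute a ⁅a, b⁆ := h ▸ (Commute.refl a).mul_right hac
    rw [pow_succ_lie_of_commute_lie commute_lie, h, ← mul_assoc, ← pow_succ]

end PowerRule

theorem lemma_2_7_1_general {R A : Type*} [Semiring R] [Ring A] [Module R A]
    (g x : A) (h : g * x - x * g = g - g ^ 2) (i : ℕ) :
    g ^ i * x = x * g ^ i + (i : R) • g ^ i - (i : R) • g ^ (i + 1) := by
  have commute_one_sub : Commute g (1 - g) := (Commute.one_right g).sub_right (Commute.refl g)
  have lie_eq : ⁅g, x⁆ = g * (1 - g) := by rw [Ring.lie_def, h, mul_one_sub, sq]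
  have pow_lie : g ^ i * x - x * g ^ i = i • (g ^ i * (1 - g)) :=
    pow_lie_of_lie_eq_mul commute_one_sub lie_eq i
  rw [Nat.cast_smul_eq_nsmul, Nat.cast_smul_eq_nsmul, add_sub_assoc, ← nsmul_sub, pow_succ,
    ← mul_one_sub, ← pow_lie, add_sub_cancel]

/-- Lemma 2.7(1): if `g * x - x * g = g - g ^ 2` in an associative unital `K`-algebra,
then `g ^ i * x = x * g ^ i + i • g ^ i - i • g ^ (i + 1)` for all natural numbers `i`. -/
theorem lemma_2_7_1 {K A : Type*} [Field K] [Ring A] [Algebra K A]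
    (g x : A) (h : g * x - x * g = g - g ^ 2) (i : ℕ) :
    g ^ i * x = x * g ^ i + (i : K) • g ^ i - (i : K) • g ^ (i + 1) :=
  lemma_2_7_1_general g x h i
end

section
/- Let K be a field of prime characteristic p, and let A be an associative unital K-algebra containing elements g, x such that g^n = 1 for some positive integer n and gx − xg = g − g². Then (g)(ad_R x)^{p−1} = g − g^p and (g)(ad_R x)^p = gx − xg. (Lemma 2.7(2) of the paper.) -/
/-!
In characteristic `p` the derivation `D = (·)(ad_R x)` satisfies
`D (g ^ k) = k • (g ^ k - g ^ (k + 1))`, so `D - k` sends `g ^ k` to `-k • g ^ (k + 1)` and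
`(D - 1) (D - 2) ⋯ (D - (p - 1))` sends `g` to `(-1) ^ (p - 1) (p - 1)! • g ^ p = -g ^ p` by
Wilson's theorem. By Fermat's little theorem that product of operators is `D ^ (p - 1) - 1`.
-/

open Finset Polynomial
open scoped Nat

section PrimeField

variable (p : ℕ) [Fact p.Prime]

theorem prod_Ico_one_X_sub_C_natCast_zmod :
    ∏ i ∈ Ico 1 p, (X - C (i : ZMod p)) = X ^ (p - 1) - 1 := by
  have natCast_injOn : Set.InjOn ((↑) : ℕ → ZMod p) (Ico 1 p : Finset ℕ) := fun i hi j hj hij ↦ by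
    rw [coe_Ico, Set.mem_Ico] at hi hj
    rwa [ZMod.natCast_eq_natCast_iff', Nat.mod_eq_of_lt hi.2, Nat.mod_eq_of_lt hj.2] at hij
  have prod_monic : (∏ i ∈ Ico 1 p, (X - C (i : ZMod p))).Monic := monic_prod_X_sub_C _ _
  have prod_degree : (∏ i ∈ Ico 1 p, (X - C (i : ZMod p))).degree =
      ((p - 1 : ℕ) : WithBot ℕ) := by
    rw [degree_eq_natDegree prod_monic.ne_zero, natDegree_finsetProd_X_sub_C_eq_card, Nat.card_Ico]
  have sub_one_pos : 0 < p - 1 := Nat.sub_pos_of_lt (Fact.out : p.Prime).one_lt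
  refine eq_of_degree_le_of_eval_index_eq _ natCast_injOn ?_ ?_ ?_ fun i hi ↦ ?_
  · rw [prod_degree, Nat.card_Ico]
  · rw [prod_degree, ← C_1, degree_X_pow_sub_C sub_one_pos]
  · rw [prod_monic.leadingCoeff, leadingCoeff_X_pow_sub_one sub_one_pos]
  · have natCast_ne_zero : (i : ZMod p) ≠ 0 := by
      rw [mem_Ico] at hi
      rw [Ne, ZMod.natCast_eq_zero_iff]
      exact Nat.not_dvd_of_pos_of_lt hi.1 hi.2
    have eval_prod_eq_zero : eval (i : ZMod p) (∏ j ∈ Ico 1 p, (X - C (j : ZMod p))) = 0 := by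
      rw [eval_prod]
      exact prod_eq_zero hi (by rw [eval_sub, eval_X, eval_C, sub_self])
    rw [eval_prod_eq_zero, eval_sub, eval_pow, eval_X, eval_one,
      ZMod.pow_card_sub_one_eq_one natCast_ne_zero, sub_self]

end PrimeField

section Module

variable {R M : Type*} [CommRing R] [AddCommGroup M] [Module R M]

theorem aeval_prod_Ico_one_X_sub_C_apply_of_apply_eq_smul_sub {D : Module.End R M} {v : ℕ → M}
    (hD : ∀ k, D (v k) = (k : R) • (v k - v (k + 1))) (n : ℕ) :
    aeval D (∏ i ∈ Ico 1 (n + 1), (X - C (i : R))) (v 1) = ((-1) ^ n * (n ! : R)) • v (n + 1) := by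
  induction n with
  | zero => simp
  | succ n ih =>
    have sub_apply : aeval D (X - C ((n + 1 : ℕ) : R)) (v (n + 1)) =
        -((n + 1 : ℕ) : R) • v (n + 2) := by
      rw [map_sub, aeval_X, aeval_C, LinearMap.sub_apply, Module.algebraMap_end_apply, hD]
      module
    rw [prod_Ico_succ_top (by omega), mul_comm, map_mul, Module.End.mul_apply, ih, map_smul,
      sub_apply, smul_smul, Nat.factorial_succ]
    congr 1
    push_cast
    ring

theorem pow_prime_sub_one_apply_of_apply_eq_smul_sub {p : ℕ} [Fact p.Prime] [Module (ZMod p) M]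
    {D : Module.End (ZMod p) M} {v : ℕ → M}
    (hD : ∀ k, D (v k) = (k : ZMod p) • (v k - v (k + 1))) :
    (D ^ (p - 1)) (v 1) = v 1 - v p := by
  have one_le : 1 ≤ p := (Fact.out : p.Prime).one_le
  have wilson : (-1) ^ (p - 1) * ((p - 1)! : ZMod p) = -1 := by
    rw [ZMod.pow_card_sub_one_eq_one (neg_ne_zero.2 one_ne_zero), ZMod.wilsons_lemma, one_mul]
  have apply_prod := aeval_prod_Ico_one_X_sub_C_apply_of_apply_eq_smul_sub hD (p - 1)
  rw [Nat.sub_add_cancel one_le, prod_Ico_one_X_sub_C_natCast_zmod, wilson, map_sub, map_pow,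
    aeval_X, map_one, LinearMap.sub_apply, Module.End.one_apply, neg_one_smul] at apply_prod
  rw [sub_eq_iff_eq_add.1 apply_prod, neg_add_eq_sub]

theorem pow_prime_apply_of_apply_eq_smul_sub {p : ℕ} [Fact p.Prime] [Module (ZMod p) M]
    {D : Module.End (ZMod p) M} {v : ℕ → M}
    (hD : ∀ k, D (v k) = (k : ZMod p) • (v k - v (k + 1))) :
    (D ^ p) (v 1) = D (v 1) :=
  calc (D ^ p) (v 1)
      = D ((D ^ (p - 1)) (v 1)) := by
        rw [← Module.End.mul_apply, mul_pow_sub_one (Fact.out : p.Prime).ne_zero]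
    _ = D (v 1) - D (v p) := by rw [pow_prime_sub_one_apply_of_apply_eq_smul_sub hD, map_sub]
    _ = D (v 1) := by rw [hD p, CharP.cast_eq_zero, zero_smul, sub_zero]

end Module

section Commutator

variable {A : Type*} [Ring A] {g x : A}

theorem pow_mul_sub_mul_pow_of_commutator_eq (h : g * x - x * g = g - g ^ 2) (k : ℕ) :
    g ^ k * x - x * g ^ k = k • (g ^ k - g ^ (k + 1)) := by
  induction k with
  | zero => simp
  | succ k ih =>
    calc g ^ (k + 1) * x - x * g ^ (k + 1)
        = g ^ k * (g * x - x * g) + (g ^ k * x - x * g ^ k) * g := by noncomm_ring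
      _ = g ^ k * (g - g ^ 2) + k • (g ^ k - g ^ (k + 1)) * g := by rw [h, ih]
      _ = (k + 1) • (g ^ (k + 1) - g ^ (k + 1 + 1)) := by
        rw [smul_mul_assoc, sub_mul, mul_sub, ← pow_succ, ← pow_succ, ← pow_add, succ_nsmul']

/-- The map `b ↦ [b, x]`, written `(b)(ad_R x)` in the paper, as an `R`-linear endomorphism. -/
def adRight (R : Type*) [CommRing R] [Algebra R A] (x : A) : Module.End R A :=
  LinearMap.mulRight R x - LinearMap.mulLeft R x

theorem coe_adRight_pow (R : Type*) [CommRing R] [Algebra R A] (x : A) (n : ℕ) :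
    ⇑(adRight R x ^ n) = (fun b ↦ b * x - x * b)^[n] :=
  Module.End.coe_pow _ n

theorem lemma_2_7_2_general (p : ℕ) [Fact p.Prime] [Algebra (ZMod p) A]
    (h : g * x - x * g = g - g ^ 2) :
    (fun b => b * x - x * b)^[p - 1] g = g - g ^ p ∧
      (fun b => b * x - x * b)^[p] g = g * x - x * g := by
  have apply_pow (k : ℕ) : adRight (ZMod p) x (g ^ k) = (k : ZMod p) • (g ^ k - g ^ (k + 1)) :=
    (pow_mul_sub_mul_pow_of_commutator_eq h k).trans (Nat.cast_smul_eq_nsmul _ _ _).symm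
  have first := pow_prime_sub_one_apply_of_apply_eq_smul_sub apply_pow
  have second := pow_prime_apply_of_apply_eq_smul_sub apply_pow
  rw [pow_one, coe_adRight_pow] at first second
  exact ⟨first, second⟩

end Commutator

/-- Lemma 2.7(2): in characteristic `p`, if `g ^ n = 1` for some `n > 0` and
`g * x - x * g = g - g ^ 2`, then `(g)(ad_R x)^(p-1) = g - g ^ p` and
`(g)(ad_R x)^p = g * x - x * g`. -/
theorem lemma_2_7_2 {K A : Type*} (p : ℕ) [Fact p.Prime] [Field K] [CharP K p]
    [Ring A] [Algebra K A] (g x : A) (n : ℕ) (hn : 0 < n) (hgn : g ^ n = 1)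
    (h : g * x - x * g = g - g ^ 2) :
    (fun b => b * x - x * b)^[p - 1] g = g - g ^ p ∧
      (fun b => b * x - x * b)^[p] g = g * x - x * g :=
  let _ : Algebra (ZMod p) K := ZMod.algebra K p
  let _ : Algebra (ZMod p) A := Algebra.compHom A (algebraMap (ZMod p) K)
  lemma_2_7_2_general p h
end

section
/- Let K be a field of prime characteristic p, and let A be an associative unital K-algebra containing elements g, x such that g^n = 1 for some positive integer n and gx − xg = g − g². Then (ad_L x)^{p−1}(g) = g − g^p and [x^p, g] = [x, g]. (Lemma 2.7(3) of the paper.) -/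
/-!
Put `D = ad x`, so that `D g = g * (g - 1)`. By the Leibniz rule, `g ^ a * (g - 1) ^ b` with
`a + b = p` satisfies `D v = b • v`. Summing these elements over `b < p` gives
`g * (g ^ p - (g - 1) ^ p) = g`, a telescoping geometric sum. By Fermat's little theorem
`D ^ (p - 1)` kills the summand `g ^ p` (`b = 0`) and fixes all the others, so it maps `g` to
`g - g ^ p`. One more application of `D` gives `D ^ p g = D g`, and `D ^ p = ad (x ^ p)`.
-/

section General

open Finset LieAlgebra

attribute [local instance] LieRing.ofAssociativeRing

section Leibniz

theorem lie_mul_eq_lie_mul_add_mul_lie {A : Type*} [NonUnitalRing A] (x a b : A) :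
    ⁅x, a * b⁆ = ⁅x, a⁆ * b + a * ⁅x, b⁆ := by
  simp only [Ring.lie_def, sub_mul, mul_sub, mul_assoc]
  abel

variable {A : Type*} [Ring A] {x y z g : A}

theorem lie_pow_of_lie_eq_mul (h : ⁅x, y⁆ = y * z) (hyz : Commute y z) (k : ℕ) :
    ⁅x, y ^ k⁆ = k • (y ^ k * z) := by
  induction k with
  | zero => simp [Ring.lie_def]
  | succ k ih =>
    rw [pow_succ, lie_mul_eq_lie_mul_add_mul_lie, ih, h, smul_mul_assoc, mul_assoc, ← hyz.eq,
      ← mul_assoc, succ_nsmul]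

theorem lie_pow_mul_sub_one_pow (h : ⁅x, g⁆ = g * (g - 1)) (a b : ℕ) :
    ⁅x, g ^ a * (g - 1) ^ b⁆ = g ^ a * (g - 1) ^ b * (a • (g - 1) + b • g) := by
  have hcomm : Commute g (g - 1) := (Commute.refl g).sub_right (Commute.one_right g)
  have h' : ⁅x, g - 1⁆ = (g - 1) * g := by
    rw [← hcomm.eq, ← h]
    simp [Ring.lie_def, mul_sub, sub_mul]
  calc ⁅x, g ^ a * (g - 1) ^ b⁆
      = a • (g ^ a * (g - 1)) * (g - 1) ^ b + g ^ a * b • ((g - 1) ^ b * g) := by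
        rw [lie_mul_eq_lie_mul_add_mul_lie, lie_pow_of_lie_eq_mul h hcomm,
          lie_pow_of_lie_eq_mul h' hcomm.symm]
    _ = g ^ a * (g - 1) ^ b * (a • (g - 1) + b • g) := by
        simp only [mul_add, mul_smul_comm, smul_mul_assoc, mul_assoc, (Commute.self_pow _ b).eq]

end Leibniz

section Eigenvector

variable {F M : Type*} [Field F] [Fintype F] [AddCommGroup M] [Module F M]
  {f : Module.End F M} {c : F} {v : M}

theorem end_pow_card_sub_one_apply_of_apply_eq_smul (h : f v = c • v) (hc : c ≠ 0) :
    (f ^ (Fintype.card F - 1)) v = v := by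
  rcases eq_or_ne v 0 with rfl | hv
  · exact map_zero _
  · have hf : f.HasEigenvector c v := ⟨Module.End.mem_eigenspace_iff.2 h, hv⟩
    rw [hf.pow_apply, FiniteField.pow_card_sub_one_eq_one c hc, one_smul]

end Eigenvector

section CharP

variable {p : ℕ} [Fact p.Prime] {A : Type*} [Ring A] [Algebra (ZMod p) A] {x y g : A}

theorem sub_pow_of_commute_of_algebra_zmod (h : Commute x y) : (x - y) ^ p = x ^ p - y ^ p := by
  cases subsingleton_or_nontrivial A
  · exact Subsingleton.elim _ _
  · have : CharP A p := charP_of_injective_algebraMap' (ZMod p) p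
    exact sub_pow_char_of_commute p h

variable (p) in
theorem ad_pow_char (x : A) : ad (ZMod p) A x ^ p = ad (ZMod p) A (x ^ p) := by
  simp only [ad_eq_lmul_left_sub_lmul_right, Pi.sub_apply]
  rw [sub_pow_of_commute_of_algebra_zmod (LinearMap.commute_mulLeft_right x x),
    LinearMap.pow_mulLeft, LinearMap.pow_mulRight]

variable (p) in
theorem sum_range_pow_mul_sub_one_pow (g : A) :
    ∑ k ∈ range p, g ^ (p - k) * (g - 1) ^ k = g := by
  have hcomm : Commute (g - 1) g := (Commute.refl g).sub_left (Commute.one_left g)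
  have hsum : ∑ k ∈ range p, (g - 1) ^ k * g ^ (p - 1 - k) = 1 := by
    have htel := hcomm.mul_geom_sum₂ p
    rw [sub_pow_of_commute_of_algebra_zmod (Commute.one_right g), one_pow] at htel
    simpa using htel
  calc ∑ k ∈ range p, g ^ (p - k) * (g - 1) ^ k
      = g * ∑ k ∈ range p, (g - 1) ^ k * g ^ (p - 1 - k) := by
        rw [mul_sum]
        refine sum_congr rfl fun k hk => ?_
        rw [(hcomm.pow_pow k _).eq, ← mul_assoc, ← pow_succ']
        congr 2
        have := mem_range.1 hk
        omega
    _ = g := by rw [hsum, mul_one]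

variable (p) in
theorem sum_Ico_pow_mul_sub_one_pow (g : A) :
    ∑ k ∈ Ico 1 p, g ^ (p - k) * (g - 1) ^ k = g - g ^ p := by
  rw [sum_Ico_eq_sub _ (Fact.out : p.Prime).one_le, sum_range_pow_mul_sub_one_pow, sum_range_one,
    pow_zero, mul_one, Nat.sub_zero]

theorem ad_pow_mul_sub_one_pow_eq_smul (h : ⁅x, g⁆ = g * (g - 1)) {a b : ℕ} (hab : a + b = p) :
    ad (ZMod p) A x (g ^ a * (g - 1) ^ b) = (b : ZMod p) • (g ^ a * (g - 1) ^ b) := by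
  have hp : p • (g - 1) = 0 := by
    rw [← Nat.cast_smul_eq_nsmul (ZMod p), ZMod.natCast_self, zero_smul]
  have hlog : a • (g - 1) + b • g = b • (1 : A) := by
    calc a • (g - 1) + b • g = (a + b) • (g - 1) + b • (1 : A) := by
          rw [add_smul, add_assoc, ← smul_add, sub_add_cancel]
      _ = b • (1 : A) := by rw [hab, hp, zero_add]
  rw [ad_apply, lie_pow_mul_sub_one_pow h, hlog, mul_smul_comm, mul_one, Nat.cast_smul_eq_nsmul]

theorem lie_pow_char_eq_zero (h : ⁅x, g⁆ = g * (g - 1)) : ⁅x, g ^ p⁆ = 0 := by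
  simpa using ad_pow_mul_sub_one_pow_eq_smul h (add_zero p)

theorem ad_pow_sub_one_apply_pow_mul_sub_one_pow (h : ⁅x, g⁆ = g * (g - 1)) {k : ℕ}
    (hk : k ∈ Ico 1 p) :
    (ad (ZMod p) A x ^ (p - 1)) (g ^ (p - k) * (g - 1) ^ k) = g ^ (p - k) * (g - 1) ^ k := by
  obtain ⟨hk1, hkp⟩ := mem_Ico.1 hk
  have hk0 : (k : ZMod p) ≠ 0 := by
    rw [Ne, ZMod.natCast_eq_zero_iff]
    exact Nat.not_dvd_of_pos_of_lt hk1 hkp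
  simpa only [ZMod.card] using end_pow_card_sub_one_apply_of_apply_eq_smul
    (ad_pow_mul_sub_one_pow_eq_smul h (Nat.sub_add_cancel hkp.le)) hk0

theorem ad_pow_sub_one_apply_eq_sub_pow (h : ⁅x, g⁆ = g * (g - 1)) :
    (ad (ZMod p) A x ^ (p - 1)) g = g - g ^ p := by
  have hkill : (ad (ZMod p) A x ^ (p - 1)) (g ^ p) = 0 :=
    Module.End.pow_map_zero_of_le (Nat.sub_pos_of_lt (Fact.out : p.Prime).one_lt)
      (by rw [pow_one, ad_apply, lie_pow_char_eq_zero h])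
  calc (ad (ZMod p) A x ^ (p - 1)) g
      = (ad (ZMod p) A x ^ (p - 1)) (g - g ^ p) := by rw [map_sub, hkill, sub_zero]
    _ = g - g ^ p := by
      rw [← sum_Ico_pow_mul_sub_one_pow p g, map_sum]
      exact sum_congr rfl fun k hk => ad_pow_sub_one_apply_pow_mul_sub_one_pow h hk

theorem pow_char_lie_eq_lie (h : ⁅x, g⁆ = g * (g - 1)) : ⁅x ^ p, g⁆ = ⁅x, g⁆ := by
  calc ⁅x ^ p, g⁆ = (ad (ZMod p) A x ^ p) g := by rw [ad_pow_char, ad_apply]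
    _ = ⁅x, g - g ^ p⁆ := by
      rw [← mul_pow_sub_one (Fact.out : p.Prime).ne_zero, Module.End.mul_apply,
        ad_pow_sub_one_apply_eq_sub_pow h, ad_apply]
    _ = ⁅x, g⁆ := by rw [lie_sub, lie_pow_char_eq_zero h, sub_zero]

end CharP

theorem lemma_2_7_3_general {A : Type*} (p : ℕ) [Fact p.Prime] [Ring A] [Algebra (ZMod p) A]
    (g x : A) (h : g * x - x * g = g - g ^ 2) :
    (fun b => x * b - b * x)^[p - 1] g = g - g ^ p ∧
      x ^ p * g - g * x ^ p = x * g - g * x := by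
  have hlie : ⁅x, g⁆ = g * (g - 1) := by
    rw [Ring.lie_def, ← neg_sub, h, neg_sub, sq, mul_sub, mul_one]
  have had : (fun b => x * b - b * x) = ad (ZMod p) A x := rfl
  rw [had, ← Module.End.pow_apply]
  exact ⟨ad_pow_sub_one_apply_eq_sub_pow hlie, pow_char_lie_eq_lie hlie⟩

end General

/-- Lemma 2.7(3): in characteristic `p`, if `g ^ n = 1` for some `n > 0` and
`g * x - x * g = g - g ^ 2`, then `(ad_L x)^(p-1)(g) = g - g ^ p` and
`[x ^ p, g] = [x, g]`. -/
theorem lemma_2_7_3 {K A : Type*} (p : ℕ) [Fact p.Prime] [Field K] [CharP K p]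
    [Ring A] [Algebra K A] (g x : A) (n : ℕ) (hn : 0 < n) (hgn : g ^ n = 1)
    (h : g * x - x * g = g - g ^ 2) :
    (fun b => x * b - b * x)^[p - 1] g = g - g ^ p ∧
      x ^ p * g - g * x ^ p = x * g - g * x := by
  let _ : Algebra (ZMod p) A := Algebra.compHom A (ZMod.castHom dvd_rfl K)
  exact lemma_2_7_3_general p g x h
end

section
/- Let K be a field of prime characteristic p and H a bialgebra over K. Let g ∈ H be a grouplike element with g^n = 1 for some positive integer n, and let x ∈ H satisfy Δ(x) = x ⊗ 1 + g ⊗ x and gx − xg = g − g². Then Δ(x^p − x) = (x^p − x) ⊗ 1 + g^p ⊗ (x^p − x); that is, x^p − x is (1, g^p)-skew-primitive. (Final claim of Lemma 2.7 of the paper.) -/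
/-!
Let `x` and `y` commute and let `y` commute with `g`, where `g * x - x * g = g - g ^ 2`. Put
`w = x + g * y`. The operator `T u = w * u - u * x` satisfies
`(T + n) (g ^ n * u) = g ^ (n + 1) * u * (y + n)` for every `u` commuting with `x` and `y`, so
the rising factorial `T (T + 1) ⋯ (T + n - 1)` maps `1` to `g ^ n * (y (y + 1) ⋯ (y + n - 1))`.
In characteristic `p` the rising factorial of length `p` is `X ^ p - X`, and `T ^ p` maps `1` to
`w ^ p - x ^ p` because left and right multiplications commute. Hence
`w ^ p - w = (x ^ p - x) + g ^ p * (y ^ p - y)`. In `H ⊗ H`, with `x ⊗ 1`, `g ⊗ 1` and `1 ⊗ x`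
for `x`, `g` and `y`, the element `w` is `Δ x`.
-/

open scoped TensorProduct

theorem ascPochhammer_zmod (p : ℕ) [Fact p.Prime] :
    ascPochhammer (ZMod p) p = .X ^ p - .X := by
  have hdeg : (ascPochhammer (ZMod p) p).degree = p := by
    rw [Polynomial.degree_eq_natDegree (monic_ascPochhammer _ p).ne_zero, ascPochhammer_natDegree]
  have hmonic : (.X ^ p - .X : Polynomial (ZMod p)).Monic :=
    Polynomial.monic_X_pow_sub (by simpa using (Fact.out : p.Prime).one_lt)
  have hdeg' : (.X ^ p - .X : Polynomial (ZMod p)).degree = p := by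
    rw [Polynomial.degree_eq_natDegree hmonic.ne_zero,
      FiniteField.X_pow_card_sub_X_natDegree_eq _ (Fact.out : p.Prime).one_lt]
  refine Polynomial.eq_of_degree_le_of_eval_finset_eq Finset.univ ?_ (hdeg.trans hdeg'.symm) ?_ ?_
  · simp [hdeg, ZMod.card]
  · rw [monic_ascPochhammer, hmonic]
  · intro a _
    obtain ⟨m, rfl⟩ := ZMod.natCast_zmod_surjective a
    have hdvd : p ∣ m.ascFactorial p :=
      (Nat.dvd_factorial (Fact.out : p.Prime).pos le_rfl).trans (Nat.factorial_dvd_ascFactorial m p)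
    rw [ascPochhammer_nat_eq_natCast_ascFactorial, (ZMod.natCast_eq_zero_iff _ _).2 hdvd]
    simp [ZMod.pow_card]

theorem ascPochhammer_eq_X_pow_sub_X (S : Type*) [Ring S] (p : ℕ) [Fact p.Prime] [CharP S p] :
    ascPochhammer S p = .X ^ p - .X := by
  simpa using congrArg (Polynomial.map (ZMod.castHom dvd_rfl S)) (ascPochhammer_zmod p)

theorem commute_ascPochhammer_eval {S : Type*} [Semiring S] {a b : S} (h : Commute a b) (n : ℕ) :
    Commute a ((ascPochhammer S n).eval b) := by
  induction n with
  | zero => simp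
  | succ n ih =>
    rw [ascPochhammer_succ_eval]
    exact ih.mul_right (h.add_right (Nat.commute_cast a n))

theorem mul_pow_sub_pow_mul_eq_natCast_mul {A : Type*} [Ring A] {g x : A}
    (hgx : g * x - x * g = g - g ^ 2) (n : ℕ) :
    x * g ^ n - g ^ n * x = n * (g ^ (n + 1) - g ^ n) := by
  induction n with
  | zero => simp
  | succ n ih =>
    calc x * g ^ (n + 1) - g ^ (n + 1) * x
        = (x * g ^ n - g ^ n * x) * g - g ^ n * (g * x - x * g) := by rw [pow_succ]; noncomm_ring
      _ = (n + 1 : ℕ) * (g ^ (n + 1 + 1) - g ^ (n + 1)) := by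
        rw [ih, hgx]; push_cast; simp only [pow_succ]; noncomm_ring

section LeftSubRight

variable {R A : Type*} [CommSemiring R] [Ring A] [Algebra R A] {g x y : A}

theorem mulLeft_sub_mulRight_add_natCast_apply_pow_mul (hgx : g * x - x * g = g - g ^ 2)
    (hgy : Commute g y) {u : A} (hxu : Commute x u) (hyu : Commute y u) (n : ℕ) :
    (LinearMap.mulLeft R (x + g * y) - LinearMap.mulRight R x + n) (g ^ n * u) =
      g ^ (n + 1) * (u * (y + n)) := by
  have hgyu : g * y * (g ^ n * u) = g ^ (n + 1) * (u * y) := by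
    rw [mul_assoc, ← mul_assoc y, ← (hgy.pow_left n).eq, mul_assoc, hyu.eq, pow_succ', mul_assoc]
  calc (LinearMap.mulLeft R (x + g * y) - LinearMap.mulRight R x + n) (g ^ n * u)
      = (x + g * y) * (g ^ n * u) - g ^ n * u * x + n * (g ^ n * u) := by simp
    _ = (x * g ^ n - g ^ n * x) * u + g * y * (g ^ n * u) + n * g ^ n * u := by
      rw [mul_assoc (g ^ n) u, ← hxu.eq]; noncomm_ring
    _ = n * g ^ (n + 1) * u + g ^ (n + 1) * (u * y) := by
      rw [mul_pow_sub_pow_mul_eq_natCast_mul hgx, hgyu]; noncomm_ring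
    _ = g ^ (n + 1) * (u * (y + n)) := by
      rw [(Nat.cast_commute n _).eq, mul_assoc, (Nat.cast_commute n u).eq]; noncomm_ring

theorem ascPochhammer_eval_mulLeft_sub_mulRight_apply_one (hgx : g * x - x * g = g - g ^ 2)
    (hxy : Commute x y) (hgy : Commute g y) (n : ℕ) :
    (ascPochhammer (Module.End R A) n).eval
        (LinearMap.mulLeft R (x + g * y) - LinearMap.mulRight R x) 1 =
      g ^ n * (ascPochhammer A n).eval y := by
  induction n with
  | zero => simp
  | succ n ih =>
    set T := LinearMap.mulLeft R (x + g * y) - LinearMap.mulRight R x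
    have hcomm : Commute (T + n) ((ascPochhammer (Module.End R A) n).eval T) :=
      commute_ascPochhammer_eval ((Commute.refl T).add_left (Nat.cast_commute n T)) n
    rw [ascPochhammer_succ_eval, ← hcomm.eq, Module.End.mul_apply, ih, ascPochhammer_succ_eval]
    exact mulLeft_sub_mulRight_add_natCast_apply_pow_mul hgx hgy
      (commute_ascPochhammer_eval hxy n) (commute_ascPochhammer_eval (Commute.refl y) n) n

variable (R)

theorem charP_end_of_charP (p : ℕ) [CharP A p] : CharP (Module.End R A) p :=
  charP_of_injective_ringHom (f := (Algebra.lmul R A).toRingHom) Algebra.lmul_injective p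

theorem mulLeft_sub_mulRight_pow_char (p : ℕ) [Fact p.Prime] [CharP A p] (a b : A) :
    (LinearMap.mulLeft R a - LinearMap.mulRight R b) ^ p =
      LinearMap.mulLeft R (a ^ p) - LinearMap.mulRight R (b ^ p) := by
  have := charP_end_of_charP R (A := A) p
  rw [sub_pow_char_of_commute p (LinearMap.commute_mulLeft_right a b), LinearMap.pow_mulLeft,
    LinearMap.pow_mulRight]

end LeftSubRight

theorem add_mul_pow_char_sub_self {A : Type*} [Ring A] (p : ℕ) [Fact p.Prime] [CharP A p]
    {g x y : A} (hgx : g * x - x * g = g - g ^ 2) (hxy : Commute x y) (hgy : Commute g y) :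
    (x + g * y) ^ p - (x + g * y) = (x ^ p - x) + g ^ p * (y ^ p - y) := by
  have := charP_end_of_charP ℤ (A := A) p
  have key := ascPochhammer_eval_mulLeft_sub_mulRight_apply_one (R := ℤ) hgx hxy hgy p
  simp only [ascPochhammer_eq_X_pow_sub_X, Polynomial.eval_sub, Polynomial.eval_X_pow,
    Polynomial.eval_X, mulLeft_sub_mulRight_pow_char, LinearMap.sub_apply,
    LinearMap.mulLeft_apply, LinearMap.mulRight_apply, mul_one, one_mul] at key
  rw [← key]
  abel

theorem lemma_2_7_last_general {K H : Type*} (p : ℕ) [Fact p.Prime] [CommRing K] [CharP K p]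
    [Ring H] [Bialgebra K H] (g x : H)
    (hxc : Coalgebra.comul (R := K) x = x ⊗ₜ[K] (1 : H) + g ⊗ₜ[K] x)
    (hcomm : g * x - x * g = g - g ^ 2) :
    Coalgebra.comul (R := K) (x ^ p - x) =
      (x ^ p - x) ⊗ₜ[K] (1 : H) + (g ^ p) ⊗ₜ[K] (x ^ p - x) := by
  have : CharP (H ⊗[K] H) p :=
    charP_of_injective_algebraMap (Bialgebra.algebraMap_injective (R := K) _) p
  have hgx : g ⊗ₜ[K] (1 : H) * x ⊗ₜ[K] (1 : H) - x ⊗ₜ[K] (1 : H) * g ⊗ₜ[K] (1 : H) =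
      g ⊗ₜ[K] (1 : H) - (g ⊗ₜ[K] (1 : H)) ^ 2 := by
    simp [← TensorProduct.sub_tmul, hcomm]
  have commute_tmul (a b : H) : Commute (a ⊗ₜ[K] (1 : H)) ((1 : H) ⊗ₜ[K] b) :=
    (Commute.one_right a).tmul (Commute.one_left b)
  have key := add_mul_pow_char_sub_self p hgx (commute_tmul x x) (commute_tmul g x)
  rw [map_sub, Bialgebra.comul_pow, hxc]
  simpa [← TensorProduct.sub_tmul, ← TensorProduct.tmul_sub] using key

/-- Final claim of Lemma 2.7: if `g` is grouplike with `g ^ n = 1`, `x` is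
`(1, g)`-skew-primitive and `g * x - x * g = g - g ^ 2`, then `x ^ p - x` is
`(1, g ^ p)`-skew-primitive. -/
theorem lemma_2_7_last {K H : Type*} (p : ℕ) [Fact p.Prime] [Field K] [CharP K p]
    [Ring H] [Bialgebra K H] (g x : H) (n : ℕ) (hn : 0 < n) (hgn : g ^ n = 1)
    (hgc : Coalgebra.comul (R := K) g = g ⊗ₜ[K] g)
    (hge : Coalgebra.counit (R := K) g = 1)
    (hxc : Coalgebra.comul (R := K) x = x ⊗ₜ[K] (1 : H) + g ⊗ₜ[K] x)
    (hcomm : g * x - x * g = g - g ^ 2) :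
    Coalgebra.comul (R := K) (x ^ p - x) =
      (x ^ p - x) ⊗ₜ[K] (1 : H) + (g ^ p) ⊗ₜ[K] (x ^ p - x) :=
  lemma_2_7_last_general p g x hxc hcomm
end

section
/- Let K be a field of prime characteristic p, and let A be an associative unital K-algebra with elements g, x, y and scalars λ₁, λ₂ ∈ {0, 1} ⊆ K, λ₃ ∈ K, satisfying: g^m = 1 for some positive integer m, gx − xg = λ₁(g − g²), gy − yg = λ₂(g − g²), and xy − yx + λ₁y − λ₂x = λ₃(1 − g²). Then for every integer n ≥ 2, (x)(ad_R y)^n = λ₂^{n−1}·(x)(ad_R y) − λ₃·Σ_{i=0}^{n−2} λ₂^i·(g²)(ad_R y)^{n−1−i}. In particular, (x)(ad_R y)^p = λ₂^{p−1}·(x)(ad_R y). (Lemma 2.8(1) of the paper.) -/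
/-!
Write `D b = b * y - y * b`. Applying `D` to `hxy` gives `D (D x) = λ₂ • D x - λ₃ • D (g ^ 2)`, and
iterating this recursion yields the first formula. The second one therefore amounts to
`∑ i ∈ range (p - 1), λ₂ ^ i • D^[p - 1 - i] (g ^ 2) = 0`.

On polynomials in `g` the map `D` acts as `λ₂` times the derivation `E = (X - X ^ 2) d/dX` of
`K[X]`, so the vanishing only has to be checked for `E`, `X ^ 2` and `λ₂ = 1`. Since
`E X = X - X ^ 2`, the same recursion, now for `E` and started at `X`, identifies the sum with
`E X - E^[p] X`. Finally `(E - k) (X ^ k) = -k • X ^ (k + 1)`, so `E (E - 1) ⋯ (E - (p - 1))`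
sends `X` to a multiple of `E (X ^ p) = 0`, while in characteristic `p` this product equals
`E ^ p - E`.
-/

section Development

open Polynomial Finset
open scoped Nat

theorem descPochhammer_zmod_self (p : ℕ) [Fact p.Prime] :
    descPochhammer (ZMod p) p = X ^ p - X := by
  have hp : 1 < p := (Fact.out : p.Prime).one_lt
  have hmonic : (X ^ p - X : (ZMod p)[X]).Monic :=
    monic_X_pow_sub (by rw [degree_X]; exact_mod_cast hp)
  have hdeg : (descPochhammer (ZMod p) p).degree = p := by
    rw [degree_eq_natDegree (monic_descPochhammer _ p).ne_zero, descPochhammer_natDegree]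
  have hdeg' : (X ^ p - X : (ZMod p)[X]).degree = p := by
    rw [degree_eq_natDegree hmonic.ne_zero, FiniteField.X_pow_card_sub_X_natDegree_eq _ hp]
  refine eq_of_degree_le_of_eval_finset_eq univ ?_ (hdeg.trans hdeg'.symm) ?_ fun a _ => ?_
  · rw [hdeg, card_univ, ZMod.card]
  · rw [monic_descPochhammer _ p, hmonic]
  · rw [← ZMod.natCast_zmod_val a, descPochhammer_eval_coe_nat_of_lt (ZMod.val_lt a)]
    simp

theorem descPochhammer_self_of_charP (R : Type*) [CommRing R] (p : ℕ) [Fact p.Prime] [CharP R p] :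
    descPochhammer R p = X ^ p - X := by
  rw [← descPochhammer_map (ZMod.castHom dvd_rfl R), descPochhammer_zmod_self]
  simp only [Polynomial.map_sub, Polynomial.map_pow, map_X]

theorem iterate_succ_of_apply_apply {R M : Type*} [Ring R] [AddCommGroup M] [Module R M]
    {f : Module.End R M} {c : R} {v w : M} (h : f (f v) = c • f v - f w) (n : ℕ) :
    f^[n + 1] v = c ^ n • f v - ∑ i ∈ range n, c ^ i • f^[n - i] w := by
  induction n with
  | zero => simp
  | succ n ih =>
    have hshift : ∀ i ∈ range (n + 1), c ^ i • f^[n + 1 - i] w = f (c ^ i • f^[n - i] w) := by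
      intro i hi
      rw [map_smul, ← Function.iterate_succ_apply' f, Nat.succ_sub (mem_range_succ_iff.mp hi)]
    rw [sum_congr rfl hshift, Function.iterate_succ_apply', ih, map_sub, map_smul, h,
      sum_range_succ, ← map_sum, map_smul, Nat.sub_self, Function.iterate_zero_apply, smul_sub,
      smul_smul, ← pow_succ]
    abel

section LogisticDerivation

variable (K : Type*) [CommRing K]

/-- The derivation `(X - X ^ 2) d/dX` of `K[X]`, the vector field of the logistic equation
`u' = u - u ^ 2`. It models the action of `b ↦ b * y - y * b` on the polynomials in `g` when
`g * y - y * g = g - g ^ 2`. -/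
noncomputable def logisticDerivation : Derivation K K[X] K[X] :=
  mkDerivation K (X - X ^ 2)

variable {K}

theorem logisticDerivation_apply (f : K[X]) :
    logisticDerivation K f = derivative f * (X - X ^ 2) :=
  rfl

theorem logisticDerivation_X_pow (k : ℕ) :
    logisticDerivation K (X ^ k) = (k : K) • (X ^ k - X ^ (k + 1)) := by
  cases k with
  | zero => simp
  | succ k =>
    rw [logisticDerivation_apply, derivative_X_pow, smul_eq_C_mul, Nat.add_sub_cancel]
    ring

theorem logisticDerivation_logisticDerivation_X_pow (k : ℕ) :
    logisticDerivation K (logisticDerivation K (X ^ k)) =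
      (k : K) • (logisticDerivation K (X ^ k) - logisticDerivation K (X ^ (k + 1))) := by
  simpa only [Derivation.map_smul, map_sub] using
    congrArg (logisticDerivation K) (logisticDerivation_X_pow k)

theorem aeval_logisticDerivation_descPochhammer_succ_X (n : ℕ) :
    aeval (logisticDerivation K : Module.End K K[X]) (descPochhammer K (n + 1)) X =
      ((-1) ^ n * n ! : K) • logisticDerivation K (X ^ (n + 1)) := by
  induction n with
  | zero => simp
  | succ n ih =>
    rw [descPochhammer_succ_right, mul_comm, map_mul, Module.End.mul_apply, ih, map_smul,
      map_sub, aeval_X, map_natCast, LinearMap.sub_apply, Module.End.natCast_apply,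
      Derivation.coeFn_coe, logisticDerivation_logisticDerivation_X_pow, Nat.factorial_succ]
    push_cast
    module

theorem iterate_logisticDerivation_X (p : ℕ) [Fact p.Prime] [CharP K p] :
    (logisticDerivation K)^[p] X = logisticDerivation K X := by
  obtain ⟨n, hn⟩ : ∃ n, p = n + 1 := Nat.exists_eq_succ_of_ne_zero (NeZero.ne p)
  have hzero : aeval (logisticDerivation K : Module.End K K[X]) (descPochhammer K p) X = 0 := by
    rw [hn, aeval_logisticDerivation_descPochhammer_succ_X, ← hn, logisticDerivation_X_pow,
      CharP.cast_eq_zero K p, zero_smul, smul_zero]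
  rwa [descPochhammer_self_of_charP, map_sub, map_pow, aeval_X, LinearMap.sub_apply, sub_eq_zero,
    Module.End.pow_apply] at hzero

theorem sum_iterate_logisticDerivation_X_sq (p : ℕ) [Fact p.Prime] [CharP K p] :
    ∑ i ∈ range (p - 1), (logisticDerivation K)^[p - 1 - i] (X ^ 2) = 0 := by
  have hrec : logisticDerivation K (logisticDerivation K X) =
      (1 : K) • logisticDerivation K X - logisticDerivation K (X ^ 2) := by
    simpa using logisticDerivation_logisticDerivation_X_pow (K := K) 1
  have hsum := iterate_succ_of_apply_apply (f := (logisticDerivation K : Module.End K K[X])) hrec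
    (p - 1)
  rw [Nat.sub_add_cancel NeZero.one_le] at hsum
  simpa [iterate_logisticDerivation_X, eq_sub_iff_add_eq] using hsum

end LogisticDerivation

section AdR

variable (K : Type*) {A : Type*} [CommRing K] [Ring A] [Algebra K A]

/-- The right adjoint action `ad_R y : b ↦ [b, y] = b * y - y * b`, as a `K`-linear map. -/
def adR (y : A) : Module.End K A :=
  LinearMap.mulRight K y - LinearMap.mulLeft K y

variable {K}

theorem adR_apply (y b : A) : adR K y b = b * y - y * b :=
  rfl

theorem adR_mul (y a b : A) : adR K y (a * b) = a * adR K y b + adR K y a * b := by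
  simp only [adR_apply]
  noncomm_ring

theorem adR_aeval {g y : A} (h : Commute g (adR K y g)) (f : K[X]) :
    adR K y (aeval g f) = aeval g (derivative f) * adR K y g := by
  induction f using Polynomial.induction_on with
  | C a => simp [adR_apply, Algebra.commutes]
  | add f₁ f₂ h₁ h₂ => simp only [map_add, h₁, h₂, add_mul]
  | monomial n a ih =>
    rw [pow_succ, ← mul_assoc]
    generalize C a * X ^ n = q at ih ⊢
    rw [map_mul, aeval_X, adR_mul, ih, derivative_mul, derivative_X, mul_one, map_add, map_mul,
      aeval_X, add_mul, mul_assoc _ _ g, mul_assoc _ g, h.eq, add_comm]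

theorem adR_aeval_eq_smul_logisticDerivation {g y : A} {c : K}
    (h : adR K y g = c • (g - g ^ 2)) (f : K[X]) :
    adR K y (aeval g f) = c • aeval g (logisticDerivation K f) := by
  have hcomm : Commute g (adR K y g) := by
    rw [h]
    exact ((Commute.refl g).sub_right (Commute.self_pow g 2)).smul_right c
  simp [adR_aeval hcomm, h, logisticDerivation_apply]

theorem iterate_adR_aeval {g y : A} {c : K} (h : adR K y g = c • (g - g ^ 2)) (f : K[X]) (n : ℕ) :
    (adR K y)^[n] (aeval g f) = c ^ n • aeval g ((logisticDerivation K)^[n] f) := by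
  induction n with
  | zero => simp
  | succ n ih =>
    rw [Function.iterate_succ_apply', ih, map_smul, adR_aeval_eq_smul_logisticDerivation h,
      smul_smul, ← pow_succ, ← Function.iterate_succ_apply' (logisticDerivation K)]

theorem sum_smul_iterate_adR_sq (p : ℕ) [Fact p.Prime] [CharP K p] {g y : A} {c : K}
    (h : adR K y g = c • (g - g ^ 2)) :
    ∑ i ∈ range (p - 1), c ^ i • (adR K y)^[p - 1 - i] (g ^ 2) = 0 := by
  have hterm : ∀ i ∈ range (p - 1), c ^ i • (adR K y)^[p - 1 - i] (g ^ 2) =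
      c ^ (p - 1) • aeval g ((logisticDerivation K)^[p - 1 - i] (X ^ 2)) := by
    intro i hi
    have hg : g ^ 2 = aeval g (X ^ 2 : K[X]) := by rw [map_pow, aeval_X]
    rw [hg, iterate_adR_aeval h, smul_smul, ← pow_add, Nat.add_sub_cancel' (mem_range_le hi)]
  rw [sum_congr rfl hterm, ← smul_sum, ← map_sum, sum_iterate_logisticDerivation_X_sq, map_zero,
    smul_zero]

theorem adR_adR_of_relation {x y z : A} {a b c : K}
    (h : x * y - y * x + a • y - b • x = c • (1 - z)) :
    adR K y (adR K y x) = b • adR K y x - adR K y (c • z) := by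
  have hx : adR K y x = b • x - a • y + c • (1 - z) := by
    rw [← h, adR_apply]
    abel
  have hy : adR K y y = 0 := sub_self _
  have hone : adR K y 1 = 0 := by simp [adR_apply]
  conv_lhs => rw [hx]
  simp only [map_add, map_sub, map_smul, hy, hone]
  module

theorem iterate_succ_adR_of_relation {x y z : A} {a b c : K}
    (h : x * y - y * x + a • y - b • x = c • (1 - z)) (n : ℕ) :
    (adR K y)^[n + 1] x =
      b ^ n • adR K y x - c • ∑ i ∈ range n, b ^ i • (adR K y)^[n - i] z := by
  rw [iterate_succ_of_apply_apply (adR_adR_of_relation h), smul_sum]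
  simp only [← Module.End.pow_apply, map_smul, smul_comm c]

end AdR

end Development

theorem lemma_2_8_1_general {K A : Type*} (p : ℕ) [Fact p.Prime] [CommRing K] [CharP K p]
    [Ring A] [Algebra K A] (g x y : A) (lam1 lam2 lam3 : K)
    (hgy : g * y - y * g = lam2 • (g - g ^ 2))
    (hxy : x * y - y * x + lam1 • y - lam2 • x = lam3 • ((1 : A) - g ^ 2)) :
    (∀ n : ℕ, n ≠ 0 →
      (fun b => b * y - y * b)^[n] x =
        lam2 ^ (n - 1) • (x * y - y * x) -
          lam3 • ∑ i ∈ Finset.range (n - 1),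
            lam2 ^ i • (fun b => b * y - y * b)^[n - 1 - i] (g ^ 2)) ∧
    (fun b => b * y - y * b)^[p] x = lam2 ^ (p - 1) • (x * y - y * x) := by
  have expansion (n : ℕ) (hn : n ≠ 0) : (adR K y)^[n] x = lam2 ^ (n - 1) • adR K y x -
      lam3 • ∑ i ∈ Finset.range (n - 1), lam2 ^ i • (adR K y)^[n - 1 - i] (g ^ 2) := by
    simpa only [Nat.sub_add_cancel (Nat.one_le_iff_ne_zero.mpr hn)] using
      iterate_succ_adR_of_relation hxy (n - 1)
  have at_char : (adR K y)^[p] x = lam2 ^ (p - 1) • adR K y x := by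
    rw [expansion p (NeZero.ne p), sum_smul_iterate_adR_sq p hgy, smul_zero, sub_zero]
  exact ⟨expansion, at_char⟩

/-- Lemma 2.8(1): with `g ^ m = 1`, `g * x - x * g = λ₁ • (g - g²)`,
`g * y - y * g = λ₂ • (g - g²)` and `x * y - y * x + λ₁ • y - λ₂ • x = λ₃ • (1 - g²)`
(where `λ₁, λ₂ ∈ {0,1}`), for every `n ≥ 2` one has
`(x)(ad_R y)^n = λ₂^(n-1) • (x)(ad_R y) - λ₃ • ∑_{i=0}^{n-2} λ₂^i • (g²)(ad_R y)^(n-1-i)`;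
in particular `(x)(ad_R y)^p = λ₂^(p-1) • (x)(ad_R y)`. -/
theorem lemma_2_8_1 {K A : Type*} (p : ℕ) [Fact p.Prime] [Field K] [CharP K p]
    [Ring A] [Algebra K A] (g x y : A) (lam1 lam2 lam3 : K)
    (h1 : lam1 = 0 ∨ lam1 = 1) (h2 : lam2 = 0 ∨ lam2 = 1)
    (m : ℕ) (hm : 0 < m) (hgm : g ^ m = 1)
    (hgx : g * x - x * g = lam1 • (g - g ^ 2))
    (hgy : g * y - y * g = lam2 • (g - g ^ 2))
    (hxy : x * y - y * x + lam1 • y - lam2 • x = lam3 • ((1 : A) - g ^ 2)) :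
    (∀ n : ℕ, 2 ≤ n →
      (fun b => b * y - y * b)^[n] x =
        lam2 ^ (n - 1) • (x * y - y * x) -
          lam3 • ∑ i ∈ Finset.range (n - 1),
            lam2 ^ i • (fun b => b * y - y * b)^[n - 1 - i] (g ^ 2)) ∧
    (fun b => b * y - y * b)^[p] x = lam2 ^ (p - 1) • (x * y - y * x) := by
  exact (lemma_2_8_1_general p g x y lam1 lam2 lam3 hgy hxy).imp_left fun h n hn =>
    h n (by lia)
end

section
/- Let K be a field of prime characteristic p, and let A be an associative unital K-algebra with elements g, x, y and scalars λ₁, λ₂ ∈ {0, 1} ⊆ K, λ₃ ∈ K, satisfying: g^m = 1 for some positive integer m, gx − xg = λ₁(g − g²), gy − yg = λ₂(g − g²), and xy − yx + λ₁y − λ₂x = λ₃(1 − g²). Then for every integer n ≥ 2, (ad_L x)^n(y) = (−λ₁)^{n−1}·(ad_L x)(y) − λ₃·Σ_{i=0}^{n−2} (−λ₁)^i·(ad_L x)^{n−1−i}(g²). In particular, (ad_L x)^p(y) = (−λ₁)^{p−1}·(ad_L x)(y). (Lemma 2.8(2) of the paper.) -/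
/-!
Put `D = ad x` and `c = -λ₁`. Applying `D` to the relation for `⁅x, y⁆` gives
`(D - c) (D y) = -λ₃ • D (g ^ 2)`, and dividing `D ^ n - c ^ n` by `D - c` yields the formula for
`D ^ (n + 1) y`.

For the special case `n + 1 = p` the correction term must vanish. In characteristic `p`,
`X ^ p - c ^ (p - 1) * X` is the product of the `X - k * c` with `k < p`, so dividing it by `X - c`
shows that the correction term is a multiple of `D (D - 2 * c) ⋯ (D - (p - 1) * c)` applied to
`g ^ 2`. The derivation `D` satisfies `(D - k * c) (g ^ k) = -(k * c) • g ^ (k + 1)`; hence the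
factors other than `D` raise `g ^ 2` to a multiple of `g ^ p`, which `D` kills.
-/

open Finset Polynomial

section Polynomial

variable {R : Type*} [CommRing R]

theorem prod_X_sub_C_scaleRoots {ι : Type*} (s : Finset ι) (f : ι → R) (c : R) :
    (∏ i ∈ s, (X - C (f i))).scaleRoots c = ∏ i ∈ s, (X - C (f i * c)) := by
  classical
  nontriviality R
  induction s using Finset.induction_on with
  | empty => simp only [prod_empty, one_scaleRoots]
  | insert i s hi ih =>
    have leadingCoeff_ne_zero :
        (X - C (f i)).leadingCoeff * (∏ j ∈ s, (X - C (f j))).leadingCoeff ≠ 0 := by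
      rw [(monic_X_sub_C _).leadingCoeff, (monic_prod_X_sub_C f s).leadingCoeff, mul_one]
      exact one_ne_zero
    rw [prod_insert hi, prod_insert hi, mul_scaleRoots' _ _ _ leadingCoeff_ne_zero,
      X_sub_C_scaleRoots, ih]

theorem X_pow_sub_X_scaleRoots {n : ℕ} (hn : 1 < n) (c : R) :
    (X ^ n - X : R[X]).scaleRoots c = X ^ n - C (c ^ (n - 1)) * X := by
  nontriviality R
  have natDegree_eq : (X ^ n - X : R[X]).natDegree = n := by
    rw [natDegree_sub_eq_left_of_natDegree_lt] <;> simp [hn]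
  ext i
  simp only [coeff_scaleRoots, natDegree_eq, coeff_sub, coeff_X_pow, coeff_C_mul, coeff_X]
  rcases eq_or_ne i n with rfl | hin
  · simp [hn.ne]
  · rcases eq_or_ne i 1 with rfl | hi
    · simp [hin]
    · simp [hin, hi.symm]

variable (p : ℕ) [Fact p.Prime]

theorem prod_range_X_sub_C_natCast_zmod :
    ∏ k ∈ range p, (X - C (k : ZMod p)) = X ^ p - X := by
  have monic : (X ^ p - X : (ZMod p)[X]).Monic :=
    monic_X_pow_sub (by simpa using (Fact.out : p.Prime).one_lt)
  calc ∏ k ∈ range p, (X - C (k : ZMod p))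
      = ∏ a : ZMod p, (X - C a) :=
        prod_nbij' Nat.cast ZMod.val (fun _ _ => mem_univ _)
          (fun a _ => mem_range.2 a.val_lt) (fun k hk => ZMod.val_cast_of_lt (mem_range.1 hk))
          (fun a _ => ZMod.natCast_zmod_val a) (fun _ _ => rfl)
    _ = ((X ^ p - X : (ZMod p)[X]).roots.map (X - C ·)).prod := by
        have roots := FiniteField.roots_X_pow_card_sub_X (ZMod p)
        rw [ZMod.card] at roots
        rw [roots]
        rfl
    _ = X ^ p - X := ((GaloisField.splits_zmod_X_pow_sub_X p).eq_prod_roots_of_monic monic).symm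

variable [CharP R p] (c : R)

theorem prod_range_X_sub_C_natCast :
    ∏ k ∈ range p, (X - C (k : R)) = X ^ p - X := by
  simpa [Polynomial.map_prod] using
    congrArg (Polynomial.map (ZMod.castHom dvd_rfl R)) (prod_range_X_sub_C_natCast_zmod p)

theorem prod_range_X_sub_C_natCast_mul :
    ∏ k ∈ range p, (X - C (k * c)) = X ^ p - C (c ^ (p - 1)) * X := by
  rw [← prod_X_sub_C_scaleRoots, prod_range_X_sub_C_natCast,
    X_pow_sub_X_scaleRoots (Fact.out : p.Prime).one_lt]

theorem sum_C_pow_mul_X_pow_eq_X_mul_prod :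
    ∑ i ∈ range (p - 1), C c ^ i * X ^ (p - 1 - i) = X * ∏ k ∈ Ico 2 p, (X - C (k * c)) := by
  have two_le : 2 ≤ p := (Fact.out : p.Prime).two_le
  have factor_X : ∑ i ∈ range (p - 1), C c ^ i * X ^ (p - 1 - i) =
      X * ∑ i ∈ range (p - 1), C c ^ i * X ^ (p - 1 - 1 - i) := by
    rw [mul_sum]
    refine sum_congr rfl fun i hi => ?_
    have exponent_eq : p - 1 - 1 - i + 1 = p - 1 - i := by grind
    rw [mul_left_comm, ← pow_succ', exponent_eq]
  apply (monic_X_sub_C c).isRegular.left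
  calc (X - C c) * ∑ i ∈ range (p - 1), C c ^ i * X ^ (p - 1 - i)
      = X * (X ^ (p - 1) - C c ^ (p - 1)) := by
        rw [factor_X, mul_left_comm, (Commute.all _ _).mul_neg_geom_sum₂]
    _ = X ^ p - C (c ^ (p - 1)) * X := by
        rw [mul_sub, mul_pow_sub_one (by lia), C_pow, mul_comm X]
    _ = ∏ k ∈ range p, (X - C (k * c)) := (prod_range_X_sub_C_natCast_mul p c).symm
    _ = (X - C c) * (X * ∏ k ∈ Ico 2 p, (X - C (k * c))) := by
        rw [range_eq_Ico, prod_eq_prod_Ico_succ_bot (by lia), prod_eq_prod_Ico_succ_bot (by lia)]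
        simp [mul_left_comm]

end Polynomial

section ModuleEnd

variable {R M : Type*} [CommRing R] [AddCommGroup M] [Module R M] (D : Module.End R M)

theorem aeval_prod_X_sub_C_apply_eq_smul {a : ℕ → R} {v : ℕ → M}
    (h : ∀ k, D (v k) = a k • (v k - v (k + 1))) {m n : ℕ} (hmn : m ≤ n) :
    aeval D (∏ k ∈ Ico m n, (X - C (a k))) (v m) = (∏ k ∈ Ico m n, -a k) • v n := by
  induction n, hmn using Nat.le_induction with
  | base => simp
  | succ n hmn ih =>
    have shift : aeval D (X - C (a n)) (v n) = -a n • v (n + 1) := by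
      simp only [map_sub, aeval_X, aeval_C, LinearMap.sub_apply, Module.algebraMap_end_apply, h]
      module
    rw [prod_Ico_succ_top hmn, prod_Ico_succ_top hmn, mul_comm, map_mul, Module.End.mul_apply, ih,
      map_smul, shift, smul_smul]

theorem pow_apply_eq_pow_smul_add_sum {c : R} {w u : M} (h : D w = c • w + u) (n : ℕ) :
    (D ^ n) w = c ^ n • w + ∑ i ∈ range n, c ^ i • (D ^ (n - 1 - i)) u := by
  have geom := LinearMap.congr_fun (x := w)
    ((Algebra.commute_algebraMap_left c D).geom_sum₂_mul n)
  have sub_apply_eq : (algebraMap R (Module.End R M) c - D) w = -u := by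
    simp [h]
  simp only [Module.End.mul_apply, sub_apply_eq, LinearMap.sum_apply, map_neg, LinearMap.sub_apply,
    ← map_pow, Module.algebraMap_end_apply] at geom
  rw [neg_eq_iff_eq_neg.1 geom]
  abel

end ModuleEnd

section Commutator

attribute [local instance] LieRing.ofAssociativeRing

variable {K A : Type*} [CommRing K] [Ring A] [Algebra K A]

theorem lie_pow_eq_smul_of_lie_eq {g x : A} {c : K} (h : ⁅x, g⁆ = c • (g - g ^ 2)) (k : ℕ) :
    ⁅x, g ^ k⁆ = (k * c) • (g ^ k - g ^ (k + 1)) := by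
  induction k with
  | zero => simp [Ring.lie_def]
  | succ k ih =>
    calc ⁅x, g ^ (k + 1)⁆ = ⁅x, g ^ k⁆ * g + g ^ k * ⁅x, g⁆ := by
          simp only [Ring.lie_def, pow_succ]
          noncomm_ring
      _ = ((k + 1 : ℕ) * c) • (g ^ (k + 1) - g ^ (k + 1 + 1)) := by
          rw [ih, h, smul_mul_assoc, mul_smul_comm, sub_mul, mul_sub, ← pow_succ, ← pow_succ,
            ← pow_add, ← add_smul]
          push_cast
          ring_nf

theorem sum_pow_smul_ad_pow_sq_eq_zero (p : ℕ) [Fact p.Prime] [CharP K p] {g x : A} {c : K}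
    (h : ⁅x, g⁆ = c • (g - g ^ 2)) :
    ∑ i ∈ range (p - 1), c ^ i • (LieAlgebra.ad K A x ^ (p - 1 - i)) (g ^ 2) = 0 := by
  set D := LieAlgebra.ad K A x
  have ad_pow_char : D (g ^ p) = 0 := by
    rw [LieAlgebra.ad_apply, lie_pow_eq_smul_of_lie_eq h, CharP.cast_eq_zero, zero_mul, zero_smul]
  calc ∑ i ∈ range (p - 1), c ^ i • (D ^ (p - 1 - i)) (g ^ 2)
      = aeval D (∑ i ∈ range (p - 1), C c ^ i * X ^ (p - 1 - i)) (g ^ 2) := by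
        simp only [map_sum, map_mul, ← C_pow, aeval_C, aeval_X_pow, LinearMap.sum_apply,
          Module.End.mul_apply, Module.algebraMap_end_apply]
    _ = D (aeval D (∏ k ∈ Ico 2 p, (X - C (k * c))) (g ^ 2)) := by
        rw [sum_C_pow_mul_X_pow_eq_X_mul_prod, map_mul, aeval_X, Module.End.mul_apply]
    _ = 0 := by
        rw [aeval_prod_X_sub_C_apply_eq_smul D (v := (g ^ ·)) (lie_pow_eq_smul_of_lie_eq h)
          (Fact.out : p.Prime).two_le, map_smul, ad_pow_char, smul_zero]

theorem ad_pow_succ_eq_pow_smul_sub_sum {x y z : A} {a b d : K}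
    (h : ⁅x, y⁆ + a • y - b • x = d • (1 - z)) (n : ℕ) :
    (LieAlgebra.ad K A x ^ (n + 1)) y =
      (-a) ^ n • ⁅x, y⁆ - d • ∑ i ∈ range n, (-a) ^ i • (LieAlgebra.ad K A x ^ (n - i)) z := by
  set D := LieAlgebra.ad K A x
  have lie_eq : ⁅x, y⁆ = -a • y + b • x + d • (1 - z) := by
    rw [← h]
    module
  have ad_self : D x = 0 := lie_self x
  have ad_one : D 1 = 0 := by simp [D, Ring.lie_def]
  have recurrence : D ⁅x, y⁆ = -a • ⁅x, y⁆ + D (-d • z) := by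
    nth_rw 1 [lie_eq]
    rw [map_add, map_add, map_smul, map_smul, map_smul, map_smul, map_sub, ad_self, ad_one,
      LieAlgebra.ad_apply]
    module
  rw [pow_succ, Module.End.mul_apply, LieAlgebra.ad_apply,
    pow_apply_eq_pow_smul_add_sum D recurrence, sub_eq_add_neg, ← neg_smul, smul_sum]
  congr 1
  refine sum_congr rfl fun i hi => ?_
  have exponent_eq : n - 1 - i + 1 = n - i := by grind
  rw [← Module.End.mul_apply, ← pow_succ, exponent_eq, map_smul, smul_comm]

theorem iterate_lie_eq_ad_pow (x : A) (n : ℕ) :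
    (fun b => ⁅x, b⁆)^[n] = ⇑(LieAlgebra.ad K A x ^ n) :=
  (Module.End.coe_pow (LieAlgebra.ad K A x) n).symm

theorem lemma_2_8_2_general {K A : Type*} (p : ℕ) [Fact p.Prime] [CommRing K] [CharP K p]
    [Ring A] [Algebra K A] (g x y : A) (lam1 lam2 lam3 : K)
    (hgx : g * x - x * g = lam1 • (g - g ^ 2))
    (hxy : x * y - y * x + lam1 • y - lam2 • x = lam3 • ((1 : A) - g ^ 2)) :
    (∀ n : ℕ, 1 ≤ n →
      (fun b => x * b - b * x)^[n] y =
        (-lam1) ^ (n - 1) • (x * y - y * x) -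
          lam3 • ∑ i ∈ Finset.range (n - 1),
            (-lam1) ^ i • (fun b => x * b - b * x)^[n - 1 - i] (g ^ 2)) ∧
    (fun b => x * b - b * x)^[p] y = (-lam1) ^ (p - 1) • (x * y - y * x) := by
  simp only [← Ring.lie_def, iterate_lie_eq_ad_pow (K := K)] at hxy ⊢
  have lie_eq : ⁅x, g⁆ = -lam1 • (g - g ^ 2) := by
    rw [neg_smul, ← hgx, Ring.lie_def, neg_sub]
  have formula (n : ℕ) (hn : 1 ≤ n) :=
    Nat.sub_add_cancel hn ▸ ad_pow_succ_eq_pow_smul_sub_sum hxy (n - 1)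
  refine ⟨formula, ?_⟩
  rw [formula p (Fact.out : p.Prime).one_le, sum_pow_smul_ad_pow_sq_eq_zero p lie_eq, smul_zero,
    sub_zero]

end Commutator

/-- Lemma 2.8(2): with `g ^ m = 1`, `g * x - x * g = λ₁ • (g - g²)`,
`g * y - y * g = λ₂ • (g - g²)` and `x * y - y * x + λ₁ • y - λ₂ • x = λ₃ • (1 - g²)`
(where `λ₁, λ₂ ∈ {0,1}`), for every `n ≥ 2` one has
`(ad_L x)^n(y) = (-λ₁)^(n-1) • (ad_L x)(y) - λ₃ • ∑_{i=0}^{n-2} (-λ₁)^i • (ad_L x)^(n-1-i)(g²)`;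
in particular `(ad_L x)^p(y) = (-λ₁)^(p-1) • (ad_L x)(y)`. -/
theorem lemma_2_8_2 {K A : Type*} (p : ℕ) [Fact p.Prime] [Field K] [CharP K p]
    [Ring A] [Algebra K A] (g x y : A) (lam1 lam2 lam3 : K)
    (h1 : lam1 = 0 ∨ lam1 = 1) (h2 : lam2 = 0 ∨ lam2 = 1)
    (m : ℕ) (hm : 0 < m) (hgm : g ^ m = 1)
    (hgx : g * x - x * g = lam1 • (g - g ^ 2))
    (hgy : g * y - y * g = lam2 • (g - g ^ 2))
    (hxy : x * y - y * x + lam1 • y - lam2 • x = lam3 • ((1 : A) - g ^ 2)) :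
    (∀ n : ℕ, 2 ≤ n →
      (fun b => x * b - b * x)^[n] y =
        (-lam1) ^ (n - 1) • (x * y - y * x) -
          lam3 • ∑ i ∈ Finset.range (n - 1),
            (-lam1) ^ i • (fun b => x * b - b * x)^[n - 1 - i] (g ^ 2)) ∧
    (fun b => x * b - b * x)^[p] y = (-lam1) ^ (p - 1) • (x * y - y * x) := by
  have general := lemma_2_8_2_general p g x y lam1 lam2 lam3 hgx hxy
  exact ⟨fun n hn => general.1 n (one_le_two.trans hn), general.2⟩
end

section
/- Let K be a field of prime characteristic p, and let A be an associative unital K-algebra with elements g, x, y, scalars λ₁, λ₃ ∈ K and a natural number μ, satisfying: g^m = 1 for some positive integer m, gx − xg = λ₁(g − g²), gy = yg, and xy − yx + λ₁μ·y = λ₃(1 − g^{μ+1}) (with μ interpreted in K). Then (x)(ad_R y)^n = 0 for every integer n ≥ 2. (Lemma 2.9(1) of the paper.) -/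
/-!
The relation between `x` and `y` writes `[x, y]` as a combination of `y`, `1` and a power of `g`,
all of which commute with `y`. Hence `[[x, y], y] = 0`, and further commutators with `y` stay zero.
-/

theorem iterate_commutator_eq_zero_of_commute {A : Type*} [NonUnitalNonAssocRing A] {x y : A}
    (h : Commute (x * y - y * x) y) {n : ℕ} (hn : 2 ≤ n) :
    (fun b => b * y - y * b)^[n] x = 0 := by
  obtain ⟨k, rfl⟩ := Nat.exists_eq_add_of_le' hn
  have double_commutator : (fun b => b * y - y * b)^[2] x = 0 := sub_eq_zero.mpr h.eq
  rw [Function.iterate_add_apply, double_commutator]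
  exact Function.iterate_fixed (by simp) k

theorem commute_commutator_of_add_smul_eq {R A : Type*} [NonUnitalNonAssocRing A] [SMul R A]
    [IsScalarTower R A A] [SMulCommClass R A A] {x y z : A} {a : R} (hzy : Commute z y)
    (hxy : x * y - y * x + a • y = z) : Commute (x * y - y * x) y := by
  rw [eq_sub_of_add_eq hxy]
  exact hzy.sub_left ((Commute.refl y).smul_left a)

theorem lemma_2_9_1_general {R A : Type*} [CommSemiring R] [Ring A] [Algebra R A] {g x y : A}
    {a b : R} {k : ℕ} (hgy : Commute g y)
    (hxy : x * y - y * x + a • y = b • (1 - g ^ k)) {n : ℕ} (hn : 2 ≤ n) :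
    (fun b => b * y - y * b)^[n] x = 0 := by
  have hzy : Commute (b • (1 - g ^ k)) y :=
    ((Commute.one_left y).sub_left (hgy.pow_left k)).smul_left b
  exact iterate_commutator_eq_zero_of_commute (commute_commutator_of_add_smul_eq hzy hxy) hn

/-- Lemma 2.9(1): with `g ^ m = 1`, `g * x - x * g = λ₁ • (g - g²)`, `g * y = y * g`
and `x * y - y * x + (λ₁·μ) • y = λ₃ • (1 - g^(μ+1))`, one has `(x)(ad_R y)^n = 0`
for every `n ≥ 2`. -/
theorem lemma_2_9_1 {K A : Type*} (p : ℕ) [Fact p.Prime] [Field K] [CharP K p]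
    [Ring A] [Algebra K A] (g x y : A) (lam1 lam3 : K) (μ : ℕ)
    (m : ℕ) (hm : 0 < m) (hgm : g ^ m = 1)
    (hgx : g * x - x * g = lam1 • (g - g ^ 2))
    (hgy : g * y = y * g)
    (hxy : x * y - y * x + (lam1 * (μ : K)) • y = lam3 • ((1 : A) - g ^ (μ + 1))) :
    ∀ n : ℕ, 2 ≤ n → (fun b => b * y - y * b)^[n] x = 0 :=
  fun _ hn => lemma_2_9_1_general hgy hxy hn
end

section
/- Let H be a bialgebra over a field K, let g, h, k ∈ H be grouplike elements, and let x, y ∈ H. Assume that the elements g, h, k, x pairwise commute, that gy = yg, and that Δ(y) = y ⊗ 1 + k ⊗ y + ω, where ω lies in A ⊗ A for A the (commutative) unital subalgebra of H generated by g, h, k, x. Then the following identity holds in the algebra H ⊗_K H: [d^1_{g,h}(x), Δ(y)] = d^1_{g,hk}([x,y]) + [h,y] ⊗ x. (Lemma 2.4 of the paper.) -/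
open scoped TensorProduct

/-!
On decomposable tensors the commutator is easy to compute as soon as one pair of factors commutes:
then `⁅a ⊗ b, c ⊗ d⁆` is `(a * c) ⊗ ⁅b, d⁆` or `⁅a, c⁆ ⊗ (b * d)`. Since `Δ` is multiplicative, the
term `-Δ x` of `d¹_{g,h}(x)` contributes `-Δ ⁅x, y⁆`, so only the commutators of `h ⊗ x` and
`x ⊗ g` with the three summands of `Δ y` remain; those with `ω` vanish because `h`, `x` and `g`
centralise the commutative subalgebra in whose tensor square `ω` lies.
-/

section Tensor

variable {R A B : Type*} [CommSemiring R]

theorem commute_tmul_of_mem_span_adjoin [Semiring A] [Algebra R A] [Semiring B] [Algebra R B]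
    {s : Set A} {t : Set B} {a : A} {b : B} {ω : A ⊗[R] B}
    (ha : ∀ c ∈ s, Commute a c) (hb : ∀ d ∈ t, Commute b d)
    (hω : ω ∈ Submodule.span R {z : A ⊗[R] B |
      ∃ c ∈ Algebra.adjoin R s, ∃ d ∈ Algebra.adjoin R t, z = c ⊗ₜ[R] d}) :
    Commute (a ⊗ₜ[R] b) ω := by
  induction hω using Submodule.span_induction with
  | mem z hz =>
    obtain ⟨c, hc, d, hd, rfl⟩ := hz
    exact (Algebra.commute_of_mem_adjoin_of_forall_mem_commute hc ha).tmul
      (Algebra.commute_of_mem_adjoin_of_forall_mem_commute hd hb)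
  | zero => exact Commute.zero_right _
  | add z w _ _ hz hw => exact hz.add_right hw
  | smul r z _ hz => exact hz.smul_right r

variable [Ring A] [Algebra R A] [Ring B] [Algebra R B]

theorem lie_tmul_tmul_of_commute_left {a c : A} (h : Commute a c) (b d : B) :
    ⁅a ⊗ₜ[R] b, c ⊗ₜ[R] d⁆ = (a * c) ⊗ₜ[R] ⁅b, d⁆ := by
  simp only [Ring.lie_def, Algebra.TensorProduct.tmul_mul_tmul, TensorProduct.tmul_sub, h.eq]

theorem lie_tmul_tmul_of_commute_right (a c : A) {b d : B} (h : Commute b d) :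
    ⁅a ⊗ₜ[R] b, c ⊗ₜ[R] d⁆ = ⁅a, c⁆ ⊗ₜ[R] (b * d) := by
  simp only [Ring.lie_def, Algebra.TensorProduct.tmul_mul_tmul, TensorProduct.sub_tmul, h.eq]

end Tensor

/-- The differential `d¹_{g,h}` from degree one to degree two of the cobar complex of a coalgebra
with coefficients in `R`, coacted on through `h` from the left and through `g` from the right. For
grouplike `g` and `h` its kernel consists of the skew-primitive elements, those `z` with
`Δ z = h ⊗ z + z ⊗ g`; the formula is taken as the definition for arbitrary `g` and `h`. -/
def cobarDifferential (R : Type*) {C : Type*} [CommSemiring R] [AddCommGroup C] [Module R C]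
    [Coalgebra R C] (g h z : C) : C ⊗[R] C :=
  h ⊗ₜ[R] z - Coalgebra.comul (R := R) z + z ⊗ₜ[R] g

section Bialgebra

variable {R H : Type*} [CommSemiring R] [Ring H] [Bialgebra R H]

theorem comul_lie (x y : H) :
    Coalgebra.comul (R := R) ⁅x, y⁆ =
      ⁅Coalgebra.comul (R := R) x, Coalgebra.comul (R := R) y⁆ := by
  simp only [Ring.lie_def, map_sub, Bialgebra.comul_mul]

attribute [local instance] LieRing.ofAssociativeRing

theorem lemma_2_4_general {g h k x y : H} {ω : H ⊗[R] H}
    (hk : Commute h k) (kx : Commute k x) (gy : Commute g y)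
    (hxω : Commute (h ⊗ₜ[R] x) ω) (xgω : Commute (x ⊗ₜ[R] g) ω)
    (hy : Coalgebra.comul (R := R) y = y ⊗ₜ[R] (1 : H) + k ⊗ₜ[R] y + ω) :
    ⁅cobarDifferential R g h x, Coalgebra.comul (R := R) y⁆ =
      cobarDifferential R g (h * k) ⁅x, y⁆ + ⁅h, y⁆ ⊗ₜ[R] x := by
  have lie_left : ⁅h ⊗ₜ[R] x, Coalgebra.comul (R := R) y⁆ =
      ⁅h, y⁆ ⊗ₜ[R] x + (h * k) ⊗ₜ[R] ⁅x, y⁆ := by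
    rw [hy, lie_add, lie_add, lie_tmul_tmul_of_commute_right h y (Commute.one_right x),
      lie_tmul_tmul_of_commute_left hk, hxω.lie_eq, mul_one, add_zero]
  have lie_right : ⁅x ⊗ₜ[R] g, Coalgebra.comul (R := R) y⁆ = ⁅x, y⁆ ⊗ₜ[R] g := by
    have xg_ky : Commute (x ⊗ₜ[R] g) (k ⊗ₜ[R] y) := kx.symm.tmul gy
    rw [hy, lie_add, lie_add, lie_tmul_tmul_of_commute_right x y (Commute.one_right g),
      xg_ky.lie_eq, xgω.lie_eq, mul_one, add_zero, add_zero]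
  rw [cobarDifferential, add_lie, sub_lie, lie_left, lie_right, ← comul_lie, cobarDifferential]
  abel

end Bialgebra

/-- Lemma 2.4: if `g, h, k` are grouplike, `g, h, k, x` pairwise commute, `g * y = y * g`
and `Δ(y) = y ⊗ 1 + k ⊗ y + ω` with `ω` in the image of `A ⊗ A` for `A` the subalgebra
generated by `g, h, k, x`, then `[d¹_{g,h}(x), Δ(y)] = d¹_{g,hk}([x,y]) + [h,y] ⊗ x`. -/
theorem lemma_2_4 {K H : Type*} [Field K] [Ring H] [Bialgebra K H]
    (g h k x y : H)
    (hgc : Coalgebra.comul (R := K) g = g ⊗ₜ[K] g)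
    (hge : Coalgebra.counit (R := K) g = 1)
    (hhc : Coalgebra.comul (R := K) h = h ⊗ₜ[K] h)
    (hhe : Coalgebra.counit (R := K) h = 1)
    (hkc : Coalgebra.comul (R := K) k = k ⊗ₜ[K] k)
    (hke : Coalgebra.counit (R := K) k = 1)
    (cgh : g * h = h * g) (cgk : g * k = k * g) (cgx : g * x = x * g)
    (chk : h * k = k * h) (chx : h * x = x * h) (ckx : k * x = x * k)
    (cgy : g * y = y * g)
    (ω : H ⊗[K] H)
    (hω : ω ∈ Submodule.span K {z : H ⊗[K] H |
      ∃ a ∈ Algebra.adjoin K ({g, h, k, x} : Set H),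
        ∃ b ∈ Algebra.adjoin K ({g, h, k, x} : Set H), z = a ⊗ₜ[K] b})
    (hy : Coalgebra.comul (R := K) y = y ⊗ₜ[K] (1 : H) + k ⊗ₜ[K] y + ω) :
    (h ⊗ₜ[K] x - Coalgebra.comul (R := K) x + x ⊗ₜ[K] g) * Coalgebra.comul (R := K) y -
        Coalgebra.comul (R := K) y * (h ⊗ₜ[K] x - Coalgebra.comul (R := K) x + x ⊗ₜ[K] g) =
      ((h * k) ⊗ₜ[K] (x * y - y * x) - Coalgebra.comul (R := K) (x * y - y * x) +
          (x * y - y * x) ⊗ₜ[K] g) +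
        (h * y - y * h) ⊗ₜ[K] x := by
  refine lemma_2_4_general chk ckx cgy (commute_tmul_of_mem_span_adjoin ?_ ?_ hω)
    (commute_tmul_of_mem_span_adjoin ?_ ?_ hω) hy <;>
    simp [commute_iff_eq, cgh, cgk, cgx, chk, chx, ckx]
end

section
/- Let K be a field of prime characteristic p, and let A be an associative unital K-algebra containing elements g, x and a scalar γ ∈ K such that g^q = 1 for some positive integer q, gx − xg = g − g², and x^p − x = γ(1 − g^p). Then for every a ∈ K: (a(1 − g) + x)^p − (a(1 − g) + x) = (a^p − a + γ)(1 − g^p). (Computational core of the isomorphism criterion for the Hopf algebras A(λ₁) in Theorem 2.11 of the paper: A(λ₁) ≅ A(γ₁) if and only if some a ∈ K satisfies a^p − a + γ₁ − λ₁ = 0.) -/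
/-!
Put `u = 1 - g`, so that `[x, u] = u - u²`. The falling factorials `(y)ₙ = y(y - 1)⋯(y - n + 1)`
then obey the noncommutative Vandermonde identity
`(a u + x)ₙ = ∑_{i + j = n} (n choose i) (a)ᵢ uⁱ (x)ⱼ`.
In characteristic `p` the polynomial `(X)ₚ` is `X ^ p - X`, and for `n = p` all terms of the sum but
the two outer ones vanish.
-/

open Finset Polynomial

theorem sum_antidiagonal_prime_choose_nsmul {M : Type*} [AddCommMonoid M] {p : ℕ} (hp : p.Prime)
    (hM : ∀ m : M, p • m = 0) (f : ℕ → ℕ → M) :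
    ∑ ij ∈ antidiagonal p, p.choose ij.1 • f ij.1 ij.2 = f 0 p + f p 0 := by
  have inner_eq_zero : ∀ ij ∈ antidiagonal p, ij ≠ (0, p) ∧ ij ≠ (p, 0) →
      p.choose ij.1 • f ij.1 ij.2 = 0 := by
    rintro ⟨i, j⟩ hij ⟨hi, hj⟩
    rw [HasAntidiagonal.mem_antidiagonal] at hij
    obtain ⟨c, hc⟩ : p ∣ p.choose i := hp.dvd_choose_self (by grind) (by grind)
    rw [hc, mul_nsmul, hM, nsmul_zero]
  rw [sum_eq_add (0, p) (p, 0) (by simp [hp.ne_zero.symm]) inner_eq_zero (by simp) (by simp)]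
  simp

theorem sub_pow_prime_of_commute {A : Type*} [Ring A] {p : ℕ} (hp : p.Prime)
    (hA : ∀ b : A, p • b = 0) {u v : A} (h : Commute u v) : (u - v) ^ p = u ^ p - v ^ p := by
  have binomial := (h.sub_left (.refl v)).add_pow' p
  rw [sum_antidiagonal_prime_choose_nsmul hp hA fun i j ↦ (u - v) ^ i * v ^ j] at binomial
  rw [eq_sub_iff_add_eq']
  simpa using binomial.symm

theorem char_nsmul_eq_zero (R : Type*) {M : Type*} [Semiring R] [AddCommMonoid M] [Module R M]
    (p : ℕ) [CharP R p] (m : M) : p • m = 0 := by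
  rw [← Nat.cast_smul_eq_nsmul R, CharP.cast_eq_zero, zero_smul]

theorem descPochhammer_prime_eq_X_pow_sub_X (R : Type*) [Ring R] (p : ℕ) [Fact p.Prime]
    [CharP R p] : descPochhammer R p = X ^ p - X := by
  suffices h : descPochhammer (ZMod p) p = X ^ p - X by
    simpa [descPochhammer_map] using congrArg (map (ZMod.castHom dvd_rfl R)) h
  have hp : 1 < p := (Fact.out : p.Prime).one_lt
  have hmonic : (X ^ p - X : (ZMod p)[X]).Monic := monic_X_pow_sub (by simpa using hp)
  have hdeg : (descPochhammer (ZMod p) p).degree = p := by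
    rw [degree_eq_natDegree (monic_descPochhammer _ p).ne_zero, descPochhammer_natDegree]
  refine eq_of_degree_le_of_eval_finset_eq univ (by simp [hdeg, ZMod.card]) ?_ ?_ fun b _ ↦ ?_
  · rw [hdeg, degree_eq_natDegree hmonic.ne_zero, FiniteField.X_pow_card_sub_X_natDegree_eq _ hp]
  · rw [monic_descPochhammer, hmonic]
  · rw [← ZMod.natCast_zmod_val b, descPochhammer_eval_coe_nat_of_lt b.val_lt]
    simp

theorem mul_pow_of_mul_sub_mul_eq_sub_sq {A : Type*} [Ring A] {u x : A}
    (h : x * u - u * x = u - u ^ 2) (k : ℕ) :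
    x * u ^ k = u ^ k * x + k • (u ^ k - u ^ (k + 1)) := by
  induction k with
  | zero => simp
  | succ k ih =>
    calc x * u ^ (k + 1)
        = (u ^ k * x + k • (u ^ k - u ^ (k + 1))) * u := by rw [← ih, mul_assoc, ← pow_succ]
      _ = u ^ k * (u * x + (u - u ^ 2)) + k • (u ^ (k + 1) - u ^ (k + 2)) := by
        rw [← sub_eq_iff_eq_add'.mp h, add_mul, smul_mul_assoc, sub_mul, mul_assoc, ← pow_succ,
          ← pow_succ]
      _ = u ^ (k + 1) * x + (k + 1) • (u ^ (k + 1) - u ^ (k + 2)) := by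
        rw [mul_add, mul_sub, ← mul_assoc, ← pow_succ, ← pow_add, add_assoc, succ_nsmul']

section Algebra

variable {R A : Type*} [CommRing R] [Ring A] [Algebra R A]

theorem aeval_descPochhammer_succ (y : A) (n : ℕ) :
    aeval y (descPochhammer R (n + 1)) = (y - n) * aeval y (descPochhammer R n) := by
  rw [descPochhammer_succ_right, mul_comm]
  simp

theorem smul_add_sub_mul_pow {u x : A} (h : x * u - u * x = u - u ^ 2) (a : R) (i j : ℕ) :
    (a • u + x - (i + j : ℕ)) * u ^ i = u ^ i * (x - j) + (a - i) • u ^ (i + 1) := by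
  have hju : u ^ i * (j : A) = (j : A) * u ^ i := (Nat.cast_commute j (u ^ i)).eq.symm
  rw [sub_mul, add_mul, smul_mul_assoc, ← pow_succ', mul_pow_of_mul_sub_mul_eq_sub_sq h, mul_sub,
    hju, ← nsmul_eq_mul, ← nsmul_eq_mul, sub_smul, Nat.cast_smul_eq_nsmul]
  module

theorem aeval_smul_add_descPochhammer {u x : A} (h : x * u - u * x = u - u ^ 2) (a : R) (n : ℕ) :
    aeval (a • u + x) (descPochhammer R n) = ∑ ij ∈ antidiagonal n, n.choose ij.1 •
      (descPochhammer R ij.1).eval a • (u ^ ij.1 * aeval x (descPochhammer R ij.2)) := by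
  have sub_mul_term (i j : ℕ) : (a • u + x - (i + j : ℕ)) *
      ((descPochhammer R i).eval a • (u ^ i * aeval x (descPochhammer R j))) =
      (descPochhammer R i).eval a • (u ^ i * aeval x (descPochhammer R (j + 1))) +
        (descPochhammer R (i + 1)).eval a • (u ^ (i + 1) * aeval x (descPochhammer R j)) := by
    rw [mul_smul_comm, ← mul_assoc, smul_add_sub_mul_pow h, add_mul, smul_add, mul_assoc,
      smul_mul_assoc, ← aeval_descPochhammer_succ, smul_smul, ← descPochhammer_succ_eval]
  induction n with
  | zero => simp
  | succ n ih =>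
    rw [sum_antidiagonal_choose_succ_nsmul fun i j ↦
        (descPochhammer R i).eval a • (u ^ i * aeval x (descPochhammer R j)),
      aeval_descPochhammer_succ, ih, mul_sum, ← sum_add_distrib]
    refine sum_congr rfl fun ⟨i, j⟩ hij ↦ ?_
    obtain rfl : i + j = n := HasAntidiagonal.mem_antidiagonal.mp hij
    rw [mul_smul_comm, sub_mul_term, nsmul_add, Nat.choose_symm_add]

theorem smul_add_pow_prime_sub_self {u x : A} (p : ℕ) [Fact p.Prime] [CharP R p]
    (h : x * u - u * x = u - u ^ 2) (a : R) :
    (a • u + x) ^ p - (a • u + x) = (x ^ p - x) + (a ^ p - a) • u ^ p := by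
  have vandermonde := aeval_smul_add_descPochhammer h a p
  rw [sum_antidiagonal_prime_choose_nsmul Fact.out (char_nsmul_eq_zero R p) fun i j ↦
    (descPochhammer R i).eval a • (u ^ i * aeval x (descPochhammer R j))] at vandermonde
  simpa [descPochhammer_prime_eq_X_pow_sub_X] using vandermonde

end Algebra

theorem thm_2_11_A_general {R A : Type*} (p : ℕ) [Fact p.Prime] [CommRing R] [CharP R p]
    [Ring A] [Algebra R A] (g x : A) (hgx : g * x - x * g = g - g ^ 2) (a : R) :
    (a • (1 - g) + x) ^ p - (a • (1 - g) + x) = (x ^ p - x) + (a ^ p - a) • (1 - g ^ p) := by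
  have hux : x * (1 - g) - (1 - g) * x = (1 - g) - (1 - g) ^ 2 := by
    calc x * (1 - g) - (1 - g) * x = g * x - x * g := by noncomm_ring
      _ = (1 - g) - (1 - g) ^ 2 := by rw [hgx]; noncomm_ring
  have hpow : (1 - g) ^ p = 1 - g ^ p := by
    rw [sub_pow_prime_of_commute Fact.out (char_nsmul_eq_zero R p) (.one_left g), one_pow]
  rw [smul_add_pow_prime_sub_self p hux, hpow]

/-- Computational core of the isomorphism criterion for the Hopf algebras `A(λ₁)` in
Theorem 2.11: if `g ^ q = 1` (`q > 0`), `g * x - x * g = g - g²` and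
`x ^ p - x = γ • (1 - g ^ p)`, then for every `a ∈ K`,
`(a(1 - g) + x)^p - (a(1 - g) + x) = (a^p - a + γ)(1 - g^p)`. -/
theorem thm_2_11_A {K A : Type*} (p : ℕ) [Fact p.Prime] [Field K] [CharP K p]
    [Ring A] [Algebra K A] (g x : A) (γ : K) (q : ℕ) (hq : 0 < q) (hgq : g ^ q = 1)
    (hgx : g * x - x * g = g - g ^ 2)
    (hxp : x ^ p - x = γ • ((1 : A) - g ^ p)) (a : K) :
    (a • ((1 : A) - g) + x) ^ p - (a • ((1 : A) - g) + x) =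
      (a ^ p - a + γ) • ((1 : A) - g ^ p) := by
  rw [thm_2_11_A_general p g x hgx, hxp, ← add_smul, add_comm γ]
end

section
/- Let K be a field, and let A be an associative unital K-algebra containing elements g, x and a scalar λ ∈ K such that gx − xg = λ(g − g^{q+1}) for some natural number q. Then for every natural number n: g·x^n = (x + λ(1 − g^q))^n · g. (Claim proved in Case (A5) of the paper.) -/
theorem semiconjBy_add_iff_mul_sub_mul_eq {R : Type*} [NonUnitalNonAssocRing R] {g x d : R} :
    SemiconjBy g x (x + d) ↔ g * x - x * g = d * g := by
  rw [SemiconjBy, add_mul, sub_eq_iff_eq_add']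

theorem smul_one_sub_pow_mul_self {K A : Type*} [Ring A] [SMul K A] [IsScalarTower K A A]
    (c : K) (g : A) (q : ℕ) : (c • (1 - g ^ q)) * g = c • (g - g ^ (q + 1)) := by
  rw [smul_mul_assoc, sub_mul, one_mul, pow_succ]

theorem case_A5_claim_general {K A : Type*} [Ring A] [SMul K A] [IsScalarTower K A A]
    (g x : A) (lam : K) (q : ℕ)
    (h : g * x - x * g = lam • (g - g ^ (q + 1))) (n : ℕ) :
    g * x ^ n = (x + lam • ((1 : A) - g ^ q)) ^ n * g := by
  have semiconj : SemiconjBy g x (x + lam • (1 - g ^ q)) :=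
    semiconjBy_add_iff_mul_sub_mul_eq.mpr (h.trans (smul_one_sub_pow_mul_self lam g q).symm)
  exact (semiconj.pow_right n).eq

/-- Claim proved in Case (A5): if `g * x - x * g = λ • (g - g^(q+1))`, then
`g * x^n = (x + λ • (1 - g^q))^n * g` for every natural number `n`. -/
theorem case_A5_claim {K A : Type*} [Field K] [Ring A] [Algebra K A]
    (g x : A) (lam : K) (q : ℕ)
    (h : g * x - x * g = lam • (g - g ^ (q + 1))) (n : ℕ) :
    g * x ^ n = (x + lam • ((1 : A) - g ^ q)) ^ n * g :=
  case_A5_claim_general g x lam q h n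
end

section
/- Let K be a field, and let A be an associative unital K-algebra containing elements g, x and scalars ξ, λ ∈ K such that gx − ξxg = λ(g − g^{q+1}) for some natural number q. Then for every positive integer i: g^i x = ξ^i · x g^i + (Σ_{j=0}^{i−1} ξ^j) · λ · (g^i − g^{q+i}). In particular, if ξ^q = 1 and Σ_{j=0}^{q−1} ξ^j = 0 (e.g. ξ a primitive q-th root of unity), then g^q x = x g^q. (Claim proved in Case (A6) of the paper.) -/
/-!
The relation is `g * x = (ξ • x + c) * g`, where `c = λ • (1 - g ^ q)` commutes with `g`. So moving
`x` across `g` applies the affine map `y ↦ ξ • y + c` to it, and moving `x` across `g ^ i` applies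
the `i`-th iterate of that map, whose translation part is `(∑ j < i, ξ ^ j) • c`.
-/

theorem pow_eq_one_of_geom_sum_eq_zero {R : Type*} [Semiring R] {ξ : R} {n : ℕ}
    (hsum : ∑ j ∈ Finset.range n, ξ ^ j = 0) : ξ ^ n = 1 := by
  have hsplit : ξ ^ n + ∑ j ∈ Finset.range n, ξ ^ j = ξ * ∑ j ∈ Finset.range n, ξ ^ j + 1 :=
    geom_sum_succ'.symm.trans geom_sum_succ
  simpa only [hsum, add_zero, mul_zero, zero_add] using hsplit

section Semiconj

variable {R A : Type*} [Semiring R] [Semiring A] [Module R A] [IsScalarTower R A A]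
  [SMulCommClass R A A] {g x c : A} {ξ : R}

theorem semiconjBy_pow_smul_add_geom_sum_smul (hx : SemiconjBy g x (ξ • x + c))
    (hc : Commute g c) (i : ℕ) :
    SemiconjBy (g ^ i) x (ξ ^ i • x + (∑ j ∈ Finset.range i, ξ ^ j) • c) := by
  induction i with
  | zero => simp
  | succ i ih =>
    have hg : SemiconjBy g (ξ ^ i • x + (∑ j ∈ Finset.range i, ξ ^ j) • c)
        (ξ ^ i • (ξ • x + c) + (∑ j ∈ Finset.range i, ξ ^ j) • c) :=
      (hx.smul_right _).add_right (hc.smul_right _)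
    have hsucc : ξ ^ i • (ξ • x + c) + (∑ j ∈ Finset.range i, ξ ^ j) • c =
        ξ ^ (i + 1) • x + (∑ j ∈ Finset.range (i + 1), ξ ^ j) • c := by
      rw [smul_add, smul_smul, ← pow_succ, add_assoc, ← add_smul, ← geom_sum_succ']
    rw [pow_succ', ← hsucc]
    exact hg.mul_left ih

theorem commute_pow_of_geom_sum_eq_zero (hx : SemiconjBy g x (ξ • x + c)) (hc : Commute g c)
    {i : ℕ} (hsum : ∑ j ∈ Finset.range i, ξ ^ j = 0) : Commute (g ^ i) x := by
  simpa only [Commute, pow_eq_one_of_geom_sum_eq_zero hsum, hsum, one_smul, zero_smul, add_zero]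
    using semiconjBy_pow_smul_add_geom_sum_smul hx hc i

end Semiconj

theorem case_A6_claim_general {R A : Type*} [Semiring R] [Ring A] [Module R A]
    [IsScalarTower R A A] [SMulCommClass R A A] (g x : A) (ξ lam : R) (q : ℕ)
    (h : g * x - ξ • (x * g) = lam • (g - g ^ (q + 1))) (i : ℕ) :
    g ^ i * x =
      ξ ^ i • (x * g ^ i) +
        ((∑ j ∈ Finset.range i, ξ ^ j) * lam) • (g ^ i - g ^ (q + i)) ∧
    (∑ j ∈ Finset.range i, ξ ^ j = 0 → g ^ i * x = x * g ^ i) := by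
  have hc_mul (k : ℕ) : lam • (1 - g ^ q) * g ^ k = lam • (g ^ k - g ^ (q + k)) := by
    rw [smul_mul_assoc, sub_mul, one_mul, pow_add]
  have hx : SemiconjBy g x (ξ • x + lam • (1 - g ^ q)) := by
    have hc_mul_g : lam • (1 - g ^ q) * g = lam • (g - g ^ (q + 1)) := by
      simpa only [pow_one] using hc_mul 1
    rw [SemiconjBy, add_mul, hc_mul_g, smul_mul_assoc, ← h, add_sub_cancel]
  have hc : Commute g (lam • (1 - g ^ q)) :=
    ((Commute.one_right g).sub_right (Commute.self_pow g q)).smul_right lam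
  refine ⟨?_, fun hsum => (commute_pow_of_geom_sum_eq_zero hx hc hsum).eq⟩
  rw [(semiconjBy_pow_smul_add_geom_sum_smul hx hc i).eq, add_mul, smul_mul_assoc, smul_mul_assoc,
    hc_mul, smul_smul]

/-- Claim proved in Case (A6): if `g * x - ξ • (x * g) = λ • (g - g^(q+1))`, then for every
`i ≥ 1`, `g^i * x = ξ^i • (x * g^i) + (∑_{j=0}^{i-1} ξ^j) · λ • (g^i - g^(q+i))`;
in particular, if `ξ^q = 1` and `∑_{j=0}^{q-1} ξ^j = 0`, then `g^q * x = x * g^q`. -/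
theorem case_A6_claim {K A : Type*} [Field K] [Ring A] [Algebra K A]
    (g x : A) (ξ lam : K) (q : ℕ)
    (h : g * x - ξ • (x * g) = lam • (g - g ^ (q + 1))) :
    (∀ i : ℕ, 0 < i → g ^ i * x =
      ξ ^ i • (x * g ^ i) +
        ((∑ j ∈ Finset.range i, ξ ^ j) * lam) • (g ^ i - g ^ (q + i))) ∧
    (ξ ^ q = 1 → ∑ j ∈ Finset.range q, ξ ^ j = 0 → g ^ q * x = x * g ^ q) :=
  ⟨fun i _ => (case_A6_claim_general g x ξ lam q h i).1,
    fun _ hsum => (case_A6_claim_general g x ξ lam q h q).2 hsum⟩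
end
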